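/- Let (𝔩,𝔪) be a permissible pair with the algorithm notations in place. Then: (a) whenever i ∈ I and i^∨ ∈ I, one has i ≤ (i^∨)_# < i^∨ and e(Δ_i) = e(Δ_{(i^∨)_#}); (b) whenever i, i_#, (i_#)^∨ all lie in I, one has i_# < i ≤ (i_#)^∨ and either e(Δ_{(i_#)^∨}) = e(Δ_i) < e(Δ_{i_#}) or e(Δ_{(i_#)^∨}) < e(Δ_i) = e(Δ_{i_#}). -/

import Mathlib

/-!
Along a cycle `i₁ > … > i_s, j_t` of `σ` the end points grow weakly. Between elements of `I` this
holds because `≪` strictly lowers depth, so that segments of equal depth are never `≪`-related; at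
the last step it holds because `𝔡 ≤ 𝔡'` and `𝔩` is a ladder.

Suppose `i^∨ ∈ I`. Walking back along `σ⁻¹` from `i` to `i^∨` leaves the end point constant up to
`(i^∨)_#` and lowers it at `i^∨`. If `(i^∨)_#` were the element `j_t` of the cycle, the walk would
have crossed `j_t` without a change of end point; but `j_t` has the largest end point of the cycle
and `σ(j_t)` the smallest, so no end point could change at all. Hence `(i^∨)_# ∈ I`, and it is the
predecessor of `i^∨` in the fibre of `𝔡`. If it were smaller than `i`, then `i^∨ ≤ i` and
`e(Δ_i) ≤ e(Δ_{i^∨}) < e(Δ_i)`, a contradiction.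
-/

/-- A *segment* `Δ(a,b)`: a pair of integers `a ≤ b`.  `b` is the begin point
and `e` the end point. -/
structure Segment where
  b : ℤ
  e : ℤ
  le : b ≤ e

namespace Segment

/-- `Δ₁ ≪ Δ₂` : `b(Δ₁) < b(Δ₂)` and `e(Δ₁) < e(Δ₂)`. -/
def ll (Δ₁ Δ₂ : Segment) : Prop := Δ₁.b < Δ₂.b ∧ Δ₁.e < Δ₂.e

/-- `Δ₁ ≺ Δ₂` : `b(Δ₁) < b(Δ₂)`, `e(Δ₁) < e(Δ₂)` and `e(Δ₁) ≥ b(Δ₂) - 1`. -/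
def prec (Δ₁ Δ₂ : Segment) : Prop := Δ₁.b < Δ₂.b ∧ Δ₁.e < Δ₂.e ∧ Δ₂.b - 1 ≤ Δ₁.e

/-- `⁻Δ = Δ(a-1, b-1)`. -/
def shiftDown (Δ : Segment) : Segment := ⟨Δ.b - 1, Δ.e - 1, by have := Δ.le; omega⟩

end Segment

/-- The standing data of the inverse Knuth–Viennot algorithm: a nonzero multisegment
`𝔪 = Σ_{i ∈ I} Δ_i` indexed by `I = Fin n` (linearly ordered compatibly with begin
points, ties broken by reversed end points), and a ladder multisegment
`𝔩 = Σ_{t ∈ J} Δ_{j_t}` indexed by `J = Fin l` (`jseg t` is the segment `Δ_{j_{t+1}}`,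
enumerated so that `Δ_{j_l} ≪ ⋯ ≪ Δ_{j_1}`), such that the pair `(𝔩, 𝔪)` is
permissible. -/
structure KVData where
  n : ℕ
  l : ℕ
  npos : 0 < n
  lpos : 0 < l
  iseg : Fin n → Segment
  jseg : Fin l → Segment
  iOrder : ∀ i₁ i₂ : Fin n, i₂ < i₁ →
    (iseg i₂).b < (iseg i₁).b ∨ ((iseg i₂).b = (iseg i₁).b ∧ (iseg i₁).e ≤ (iseg i₂).e)
  ladder : ∀ t t' : Fin l, t < t' → Segment.ll (jseg t') (jseg t)
  permissible : ∀ (m : ℕ) (c : Fin m → Fin n),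
    (∀ r s : Fin m, r < s → Segment.ll (iseg (c s)) (iseg (c r))) →
    ∃ φ : Fin m → Fin l, StrictMono φ ∧
      ∀ t : Fin m, Segment.prec (Segment.shiftDown (iseg (c t))) (jseg (φ t))

namespace KVData

variable (D : KVData)

/-- The segment attached to an index in `I ⊔ J`. -/
def segOf : Fin D.n ⊕ Fin D.l → Segment := Sum.elim D.iseg D.jseg

/-- The set `{t : ⁻Δ_i ≪ Δ_{j_t}}` (0-based positions in the ladder `𝔩`). -/
def dPrimeSet (i : Fin D.n) : Set ℕ :=
  {t : ℕ | ∃ h : t < D.l, Segment.ll (Segment.shiftDown (D.iseg i)) (D.jseg ⟨t, h⟩)}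

/-- The set `{𝔡'(i_k) - k : i = i_0, Δ_{i_{r+1}} ≪ Δ_{i_r}}` whose minimum is `𝔡(i)`. -/
def depthSet (d' : Fin D.n → ℕ) (i : Fin D.n) : Set ℤ :=
  {z : ℤ | ∃ (k : ℕ) (c : ℕ → Fin D.n), c 0 = i ∧
    (∀ r < k, Segment.ll (D.iseg (c (r + 1))) (D.iseg (c r))) ∧
    z = (d' (c k) : ℤ) - (k : ℤ)}

/-- `d'` is the function `𝔡'` and `d` the depth function `𝔡` on `I ⊔ J`
(`𝔡'(i) = max{t : ⁻Δ_i ≪ Δ_{j_t}}`, `𝔡(i) = min{𝔡'(i_k) - k}`, `𝔡(j_t) = t`). -/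
def DepthSpec (d' : Fin D.n → ℕ) (d : Fin D.n ⊕ Fin D.l → ℤ) : Prop :=
  (∀ i, IsGreatest (D.dPrimeSet i) (d' i)) ∧
  (∀ i, IsLeast (D.depthSet d' i) (d (Sum.inl i))) ∧
  (∀ t : Fin D.l, d (Sum.inr t) = (t : ℤ))

/-- `σ` is the permutation of `I ⊔ J` whose disjoint cycles are `(i_1, …, i_s, j_t)`
where `{i_1 > … > i_s} ∪ {j_t} = 𝔡⁻¹(t)`:  an element `i ∈ I` is sent to the largest
element of `I` below it in its fiber of `𝔡`, or to the `J`-element of the fiber if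
there is none; the `J`-element of a fiber is sent to the largest `I`-element of the
fiber, or to itself if there is none. -/
def SigmaSpec (d : Fin D.n ⊕ Fin D.l → ℤ) (σ : Equiv.Perm (Fin D.n ⊕ Fin D.l)) : Prop :=
  (∀ i : Fin D.n,
    (∃ i' : Fin D.n,
        IsGreatest {i'' : Fin D.n | i'' < i ∧ d (Sum.inl i'') = d (Sum.inl i)} i' ∧
        σ (Sum.inl i) = Sum.inl i')
    ∨ ((¬ ∃ i'' : Fin D.n, i'' < i ∧ d (Sum.inl i'') = d (Sum.inl i)) ∧
        ∃ t : Fin D.l, (t : ℤ) = d (Sum.inl i) ∧ σ (Sum.inl i) = Sum.inr t)) ∧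
  (∀ t : Fin D.l,
    (∃ i : Fin D.n,
        IsGreatest {i' : Fin D.n | d (Sum.inl i') = (t : ℤ)} i ∧
        σ (Sum.inr t) = Sum.inl i)
    ∨ ((¬ ∃ i : Fin D.n, d (Sum.inl i) = (t : ℤ)) ∧ σ (Sum.inr t) = Sum.inr t))

/-- `e(Δ♣_x) ≠ e(Δ_x)`, i.e. the end point changes at `x`
(recall `Δ♣_x = Δ(b(Δ_x), e(Δ_{σ(x)}))`). -/
def breaksEnd (σ : Equiv.Perm (Fin D.n ⊕ Fin D.l)) (x : Fin D.n ⊕ Fin D.l) : Prop :=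
  (D.segOf (σ x)).e ≠ (D.segOf x).e

/-- `vee` is the map `x ↦ x^∨`:  `x^∨ = σ^{-r}(x)` for the least `r ≥ 1` such that
`e(Δ♣_{σ^{-r}(x)}) ≠ e(Δ_{σ^{-r}(x)})`, and `x^∨ = j_{𝔡(x)}` if no such `r` exists. -/
def VeeSpec (d : Fin D.n ⊕ Fin D.l → ℤ) (σ : Equiv.Perm (Fin D.n ⊕ Fin D.l))
    (vee : Fin D.n ⊕ Fin D.l → Fin D.n ⊕ Fin D.l) : Prop :=
  ∀ x : Fin D.n ⊕ Fin D.l,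
    ((∃ r : ℕ, 1 ≤ r ∧ D.breaksEnd σ ((⇑σ.symm)^[r] x)) →
      ∃ r : ℕ, 1 ≤ r ∧ vee x = (⇑σ.symm)^[r] x ∧ D.breaksEnd σ ((⇑σ.symm)^[r] x) ∧
        ∀ r' : ℕ, 1 ≤ r' → r' < r → ¬ D.breaksEnd σ ((⇑σ.symm)^[r'] x)) ∧
    ((¬ ∃ r : ℕ, 1 ≤ r ∧ D.breaksEnd σ ((⇑σ.symm)^[r] x)) →
      ∃ t : Fin D.l, (t : ℤ) = d x ∧ vee x = Sum.inr t)

/-- The multisegment `𝔪` of the data. -/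
def mSeg : Multiset Segment := Multiset.map D.iseg Finset.univ.val

/-- The ladder multisegment `𝔩` of the data. -/
def lSeg : Multiset Segment := Multiset.map D.jseg Finset.univ.val

end KVData

lemma apply_iterate_eq_of_forall_lt {α β : Type*} {f : α → α} {g : α → β} {x : α} {m : ℕ}
    (h : ∀ k < m, g (f (f^[k] x)) = g (f^[k] x)) : g (f^[m] x) = g x := by
  induction m with
  | zero => rfl
  | succ m ih =>
    rw [Function.iterate_succ_apply', h m m.lt_succ_self]
    exact ih fun k hk => h k (hk.trans m.lt_succ_self)

namespace KVData

lemma strictAnti_jseg_end (D : KVData) : StrictAnti fun t => (D.jseg t).e :=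
  fun t t' h => (D.ladder t t' h).2

variable {D : KVData} {d' : Fin D.n → ℕ} {d : Fin D.n ⊕ Fin D.l → ℤ}
  {σ : Equiv.Perm (Fin D.n ⊕ Fin D.l)} {vee : Fin D.n ⊕ Fin D.l → Fin D.n ⊕ Fin D.l}
  {x y : Fin D.n ⊕ Fin D.l} {i i' : Fin D.n} {t : Fin D.l}

lemma sub_one_mem_depthSet {z : ℤ} (hz : z ∈ D.depthSet d' i')
    (h : Segment.ll (D.iseg i') (D.iseg i)) : z - 1 ∈ D.depthSet d' i := by
  obtain ⟨k, c, rfl, hc, rfl⟩ := hz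
  refine ⟨k + 1, fun r => r.casesOn i c, rfl, fun r hr => ?_, by push_cast; ring⟩
  cases r with
  | zero => exact h
  | succ r => exact hc r (Nat.lt_of_succ_lt_succ hr)

namespace DepthSpec

lemma depth_lt_of_ll (hdep : D.DepthSpec d' d) (h : Segment.ll (D.iseg i') (D.iseg i)) :
    d (Sum.inl i) < d (Sum.inl i') :=
  Int.lt_of_le_sub_one ((hdep.2.1 i).2 (sub_one_mem_depthSet (hdep.2.1 i').1 h))

lemma depth_le_dPrime (hdep : D.DepthSpec d' d) (i : Fin D.n) : d (Sum.inl i) ≤ d' i :=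
  (hdep.2.1 i).2 ⟨0, fun _ => i, rfl, by simp, by simp⟩

lemma antitoneOn_iseg_end (hdep : D.DepthSpec d' d) (z : ℤ) :
    AntitoneOn (fun i => (D.iseg i).e) {i | d (Sum.inl i) = z} := by
  intro i hi i' hi' hle
  rcases hle.eq_or_lt with rfl | hlt
  · exact le_rfl
  rcases D.iOrder i' i hlt with hb | ⟨-, he⟩
  · by_contra! he
    exact (hdep.depth_lt_of_ll ⟨hb, he⟩).ne (hi'.trans hi.symm)
  · exact he

lemma iseg_end_le_jseg_end (hdep : D.DepthSpec d' d) (h : d (Sum.inl i) = t) :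
    (D.iseg i).e ≤ (D.jseg t).e := by
  obtain ⟨hlt, -, he⟩ := (hdep.1 i).1
  have ht : t ≤ ⟨d' i, hlt⟩ := by
    exact_mod_cast h ▸ hdep.depth_le_dPrime i
  exact (Int.le_of_sub_one_lt he).trans (D.strictAnti_jseg_end.antitone ht)

end DepthSpec

namespace SigmaSpec

lemma isGreatest_of_apply_inl (hσ : D.SigmaSpec d σ) (h : σ (Sum.inl i) = Sum.inl i') :
    IsGreatest {k | k < i ∧ d (Sum.inl k) = d (Sum.inl i)} i' := by
  rcases hσ.1 i with ⟨k, hk, hk'⟩ | ⟨-, t, -, ht⟩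
  · rwa [Sum.inl_injective (h.symm.trans hk')]
  · simp [h] at ht

lemma lt_of_apply_inl (hσ : D.SigmaSpec d σ) (h : σ (Sum.inl i) = Sum.inl i') : i' < i :=
  (hσ.isGreatest_of_apply_inl h).1.1

lemma le_of_apply_inl (hσ : D.SigmaSpec d σ) {k : Fin D.n} (h : σ (Sum.inl i) = Sum.inl i')
    (hk : k < i) (hd : d (Sum.inl k) = d (Sum.inl i)) : k ≤ i' :=
  (hσ.isGreatest_of_apply_inl h).2 ⟨hk, hd⟩

lemma depth_apply (hσ : D.SigmaSpec d σ) (hdep : D.DepthSpec d' d) (x : Fin D.n ⊕ Fin D.l) :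
    d (σ x) = d x := by
  rcases x with i | t
  · rcases hσ.1 i with ⟨i', hi', h⟩ | ⟨-, t, ht, h⟩
    · rw [h, hi'.1.2]
    · rw [h, hdep.2.2, ht]
  · rcases hσ.2 t with ⟨i, hi, h⟩ | ⟨-, h⟩
    · rw [h, hdep.2.2]
      exact hi.1
    · rw [h]

lemma iseg_end_le_apply (hσ : D.SigmaSpec d σ) (hdep : D.DepthSpec d' d) (i : Fin D.n) :
    (D.iseg i).e ≤ (D.segOf (σ (Sum.inl i))).e := by
  rcases hσ.1 i with ⟨i', hi', h⟩ | ⟨-, t, ht, h⟩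
  · rw [h]
    exact hdep.antitoneOn_iseg_end _ hi'.1.2 rfl hi'.1.1.le
  · rw [h]
    exact hdep.iseg_end_le_jseg_end ht.symm

lemma apply_inr_end_le_iseg (hσ : D.SigmaSpec d σ) (hdep : D.DepthSpec d' d)
    (h : d (Sum.inl i) = t) : (D.segOf (σ (Sum.inr t))).e ≤ (D.iseg i).e := by
  rcases hσ.2 t with ⟨k, hk, hk'⟩ | ⟨hnone, -⟩
  · rw [hk']
    exact hdep.antitoneOn_iseg_end _ h hk.1 (hk.2 h)
  · exact absurd ⟨i, h⟩ hnone

lemma iseg_end_lt_apply (hσ : D.SigmaSpec d σ) (hdep : D.DepthSpec d' d)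
    (hb : D.breaksEnd σ (Sum.inl i)) : (D.iseg i).e < (D.segOf (σ (Sum.inl i))).e :=
  (hσ.iseg_end_le_apply hdep i).lt_of_ne hb.symm

lemma breaksEnd_of_apply_eq_inr (hσ : D.SigmaSpec d σ) (hdep : D.DepthSpec d' d)
    (h : σ (Sum.inl i) = Sum.inr t) (hb : D.breaksEnd σ (Sum.inl i)) :
    D.breaksEnd σ (Sum.inr t) := by
  have hd : d (Sum.inl i) = t := by rw [← hσ.depth_apply hdep, h, hdep.2.2]
  refine ne_of_lt ?_
  calc (D.segOf (σ (Sum.inr t))).e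
      ≤ (D.iseg i).e := hσ.apply_inr_end_le_iseg hdep hd
    _ < (D.segOf (σ (Sum.inl i))).e := hσ.iseg_end_lt_apply hdep hb
    _ = (D.segOf (Sum.inr t)).e := by rw [h]

end SigmaSpec

namespace VeeSpec

lemma exists_iterate_eq_vee (hvee : D.VeeSpec d σ vee) (h : vee x = Sum.inl i) :
    ∃ r : ℕ, Sum.inl i = (⇑σ.symm)^[r + 1] x ∧ D.breaksEnd σ (Sum.inl i) ∧
      ∀ k < r, ¬ D.breaksEnd σ ((⇑σ.symm)^[k + 1] x) := by
  by_cases hex : ∃ r : ℕ, 1 ≤ r ∧ D.breaksEnd σ ((⇑σ.symm)^[r] x)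
  · obtain ⟨_ | r, hr, hv, hb, hmin⟩ := (hvee x).1 hex
    · omega
    rw [h] at hv
    exact ⟨r, hv, hv ▸ hb, fun k hk => hmin (k + 1) (by omega) (by omega)⟩
  · obtain ⟨t, -, ht⟩ := (hvee x).2 hex
    simp [h] at ht

lemma breaksEnd_vee (hvee : D.VeeSpec d σ vee) (h : vee x = Sum.inl i) :
    D.breaksEnd σ (Sum.inl i) :=
  let ⟨_, _, hb, _⟩ := hvee.exists_iterate_eq_vee h
  hb

lemma end_apply_vee (hvee : D.VeeSpec d σ vee) (h : vee x = Sum.inl i) :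
    (D.segOf (σ (Sum.inl i))).e = (D.segOf x).e := by
  obtain ⟨r, hr, -, hmin⟩ := hvee.exists_iterate_eq_vee h
  rw [hr, Function.iterate_succ_apply', Equiv.apply_symm_apply]
  refine apply_iterate_eq_of_forall_lt (g := fun y => (D.segOf y).e) fun k hk => ?_
  simpa [KVData.breaksEnd, Function.iterate_succ_apply', eq_comm] using hmin k hk

lemma depth_vee (hvee : D.VeeSpec d σ vee) (hσ : D.SigmaSpec d σ) (hdep : D.DepthSpec d' d)
    (h : vee x = Sum.inl i) : d (Sum.inl i) = d x := by
  obtain ⟨r, hr, -⟩ := hvee.exists_iterate_eq_vee h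
  rw [hr]
  refine apply_iterate_eq_of_forall_lt fun k _ => ?_
  rw [← hσ.depth_apply hdep, Equiv.apply_symm_apply]

lemma apply_vee_eq_or_not_breaksEnd (hvee : D.VeeSpec d σ vee) (h : vee x = Sum.inl i) :
    σ (Sum.inl i) = x ∨ ¬ D.breaksEnd σ (σ (Sum.inl i)) := by
  obtain ⟨_ | r, hr, -, hmin⟩ := hvee.exists_iterate_eq_vee h
  · exact Or.inl (by simp [hr])
  · right
    rw [hr, Function.iterate_succ_apply', Equiv.apply_symm_apply]
    exact hmin r r.lt_succ_self

lemma eq_vee_of_breaksEnd (hvee : D.VeeSpec d σ vee) (h : vee (σ y) = Sum.inl i)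
    (hb : D.breaksEnd σ y) : y = Sum.inl i := by
  obtain ⟨_ | r, hr, -, hmin⟩ := hvee.exists_iterate_eq_vee h
  · simpa using hr.symm
  · exact absurd hb (by simpa using hmin 0 r.succ_pos)

lemma exists_apply_vee_eq_inl (hvee : D.VeeSpec d σ vee) (hσ : D.SigmaSpec d σ)
    (hdep : D.DepthSpec d' d) (h : vee (Sum.inl i) = Sum.inl i') :
    ∃ k, σ (Sum.inl i') = Sum.inl k := by
  rcases hk : σ (Sum.inl i') with k | t
  · exact ⟨k, rfl⟩
  · have hnb : ¬ D.breaksEnd σ (Sum.inr t) := by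
      simpa [hk] using hvee.apply_vee_eq_or_not_breaksEnd h
    exact absurd (hσ.breaksEnd_of_apply_eq_inr hdep hk (hvee.breaksEnd_vee h)) hnb

lemma iseg_end_vee_lt (hvee : D.VeeSpec d σ vee) (hσ : D.SigmaSpec d σ) (hdep : D.DepthSpec d' d)
    (h : vee (Sum.inl i) = Sum.inl i') : (D.iseg i').e < (D.iseg i).e :=
  (hσ.iseg_end_lt_apply hdep (hvee.breaksEnd_vee h)).trans_eq (hvee.end_apply_vee h)

lemma le_apply_vee (hvee : D.VeeSpec d σ vee) (hσ : D.SigmaSpec d σ) (hdep : D.DepthSpec d' d)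
    {k : Fin D.n} (h : vee (Sum.inl i) = Sum.inl i') (hk : σ (Sum.inl i') = Sum.inl k) :
    i ≤ k := by
  have hd := hvee.depth_vee hσ hdep h
  refine hσ.le_of_apply_inl hk ?_ hd.symm
  by_contra! hle
  exact (hdep.antitoneOn_iseg_end _ hd rfl hle).not_gt (hvee.iseg_end_vee_lt hσ hdep h)

lemma lt_vee (hvee : D.VeeSpec d σ vee) (hσ : D.SigmaSpec d σ) (hdep : D.DepthSpec d' d)
    (h : vee (Sum.inl i) = Sum.inl i') : i < i' := by
  obtain ⟨k, hk⟩ := hvee.exists_apply_vee_eq_inl hσ hdep h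
  exact (hvee.le_apply_vee hσ hdep h hk).trans_lt (hσ.lt_of_apply_inl hk)

lemma le_vee_of_apply_eq (hvee : D.VeeSpec d σ vee) (hσ : D.SigmaSpec d σ)
    (hdep : D.DepthSpec d' d) {k : Fin D.n} (hk : σ (Sum.inl k) = Sum.inl i)
    (h : vee (Sum.inl i) = Sum.inl i') : k ≤ i' := by
  by_contra! hlt
  have hd : d (Sum.inl i') = d (Sum.inl k) := by
    rw [hvee.depth_vee hσ hdep h, ← hk, hσ.depth_apply hdep]
  exact (hσ.le_of_apply_inl hk hlt hd).not_gt (hvee.lt_vee hσ hdep h)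

end VeeSpec

end KVData

/-- further properties of `K'`.  Let `(𝔩,𝔪)` be a permissible pair
with the algorithm notations in place.  Then: (a) whenever `i ∈ I` and `i^∨ ∈ I`, one
has `i ≤ (i^∨)_# < i^∨` (in particular `(i^∨)_# ∈ I`) and `e(Δ_i) = e(Δ_{(i^∨)_#})`;
(b) whenever `i, i_#, (i_#)^∨` all lie in `I`, one has `i_# < i ≤ (i_#)^∨` and either
`e(Δ_{(i_#)^∨}) = e(Δ_i) < e(Δ_{i_#})` or `e(Δ_{(i_#)^∨}) < e(Δ_i) = e(Δ_{i_#})`. -/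
theorem vee_sharp_order_properties (D : KVData) (d' : Fin D.n → ℕ)
    (d : Fin D.n ⊕ Fin D.l → ℤ) (σ : Equiv.Perm (Fin D.n ⊕ Fin D.l))
    (vee : Fin D.n ⊕ Fin D.l → Fin D.n ⊕ Fin D.l)
    (hdep : D.DepthSpec d' d) (hσ : D.SigmaSpec d σ) (hvee : D.VeeSpec d σ vee) :
    (∀ i i' : Fin D.n, vee (Sum.inl i) = Sum.inl i' →
      ∃ i'' : Fin D.n, σ (Sum.inl i') = Sum.inl i'' ∧ i ≤ i'' ∧ i'' < i' ∧
        (D.iseg i).e = (D.iseg i'').e) ∧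
    (∀ i i₂ i₃ : Fin D.n, σ (Sum.inl i) = Sum.inl i₂ → vee (Sum.inl i₂) = Sum.inl i₃ →
      i₂ < i ∧ i ≤ i₃ ∧
        (((D.iseg i₃).e = (D.iseg i).e ∧ (D.iseg i).e < (D.iseg i₂).e) ∨
         ((D.iseg i₃).e < (D.iseg i).e ∧ (D.iseg i).e = (D.iseg i₂).e))) := by
  refine ⟨fun i i' h => ?_, fun i i₂ i₃ hi h => ?_⟩
  · obtain ⟨k, hk⟩ := hvee.exists_apply_vee_eq_inl hσ hdep h
    have he : (D.iseg i).e = (D.iseg k).e := by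
      simpa [hk, KVData.segOf] using (hvee.end_apply_vee h).symm
    exact ⟨k, hk, hvee.le_apply_vee hσ hdep h hk, hσ.lt_of_apply_inl hk, he⟩
  · refine ⟨hσ.lt_of_apply_inl hi, hvee.le_vee_of_apply_eq hσ hdep hi h, ?_⟩
    by_cases hb : D.breaksEnd σ (Sum.inl i)
    · have hi₃ : i = i₃ := Sum.inl_injective (hvee.eq_vee_of_breaksEnd (hi ▸ h) hb)
      have hlt : (D.iseg i).e < (D.iseg i₂).e := by
        simpa [hi, KVData.segOf] using hσ.iseg_end_lt_apply hdep hb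
      exact Or.inl ⟨by rw [hi₃], hlt⟩
    · have he : (D.iseg i).e = (D.iseg i₂).e := by
        simpa [KVData.breaksEnd, hi, KVData.segOf, eq_comm] using hb
      exact Or.inr ⟨(hvee.iseg_end_vee_lt hσ hdep h).trans_eq he.symm, he⟩
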